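/- Let N ⊆ P ⊆ M_m be unital *-subalgebras. Then D(M_m‖N) ≤ D(M_m‖P) + D(P‖N), where D(P‖N) = sup{D(ρ‖N) : ρ a density in P}. -/

import Mathlib

open scoped ENNReal Classical ComplexOrder
open Matrix

noncomputable section

namespace GJL

variable {n : Type*} [Fintype n] [DecidableEq n]

/-- `Mat n` is the matrix *-algebra with rows and columns indexed by `n`. -/
abbrev Mat (n : Type*) [Fintype n] [DecidableEq n] := Matrix n n ℂ

/-- A density matrix: positive semidefinite with trace one. -/
def IsDensity (ρ : Mat n) : Prop := ρ.PosSemidef ∧ ρ.trace = 1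

/-- The real part of the (matrix) trace. -/
def traceR (A : Mat n) : ℝ := (A.trace).re

/-- Real matrix powers via the continuous functional calculus.  For positive
semidefinite matrices and negative exponents this is the generalized inverse
power on the support, since `(0 : ℝ) ^ r = 0` for `r ≠ 0`. -/
def mpow (A : Mat n) (r : ℝ) : Mat n := cfc (fun x : ℝ => x ^ r) A

/-- Matrix logarithm on the support (`Real.log 0 = 0`). -/
def mlog (A : Mat n) : Mat n := cfc Real.log A

/-- Schatten `p`-norm `(Tr ((x* x)^(p/2)))^(1/p)`. -/
def snorm (p : ℝ) (x : Mat n) : ℝ := (traceR (mpow (xᴴ * x) (p/2))) ^ (1/p)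

/-- Operator norm `‖x‖_∞`. -/
def opNorm (x : Mat n) : ℝ := ‖(Matrix.toEuclideanCLM (𝕜 := ℂ) x : EuclideanSpace ℂ n →L[ℂ] EuclideanSpace ℂ n)‖

/-- The support projection of `ρ` is dominated by that of `σ` (for positive
semidefinite matrices: `ker σ ⊆ ker ρ`). -/
def suppLe (ρ σ : Mat n) : Prop := ∀ v, σ.mulVec v = 0 → ρ.mulVec v = 0

/-- `e` is the support projection of `ρ`. -/
def IsSupportProj (ρ e : Mat n) : Prop :=
  e.IsHermitian ∧ e * e = e ∧ ∀ v, e.mulVec v = 0 ↔ ρ.mulVec v = 0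

/-- `D_∞(ρ‖σ) = log min {λ ≥ 0 | ρ ≤ λ σ}`, `⊤` if no such `λ` exists. -/
def Dinf (ρ σ : Mat n) : EReal :=
  if ∃ c : ℝ, 0 ≤ c ∧ (c • σ - ρ).PosSemidef then
    ((Real.log (sInf {c : ℝ | 0 ≤ c ∧ (c • σ - ρ).PosSemidef}) : ℝ) : EReal)
  else ⊤

/-- Umegaki relative entropy `D(ρ‖σ) = Tr(ρ log ρ - ρ log σ)`, `⊤` if the
support condition fails. -/
def DU (ρ σ : Mat n) : EReal :=
  if suppLe ρ σ then ((traceR (ρ * mlog ρ - ρ * mlog σ) : ℝ) : EReal) else ⊤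

/-- The sandwiched matrix `σ^{(1-p)/(2p)} ρ σ^{(1-p)/(2p)}`; note that for
`p > 1` the exponent `(1-p)/(2p)` equals `-1/(2p')` with `1/p + 1/p' = 1`. -/
def sandwich (p : ℝ) (ρ σ : Mat n) : Mat n :=
  mpow σ ((1 - p)/(2*p)) * ρ * mpow σ ((1 - p)/(2*p))

/-- The sandwiched Rényi relative entropy `D_p(ρ‖σ)` for `p ∈ [1/2, ∞]`:
for `p ∈ (1,∞)` it is `p' log ‖σ^{-1/(2p')} ρ σ^{-1/(2p')}‖_p
= (p-1)⁻¹ log Tr ((σ^{-1/(2p')} ρ σ^{-1/(2p')})^p)` when the support of `ρ` is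
dominated by that of `σ` and `⊤` otherwise; for `p ∈ [1/2, 1)` it is
`(p-1)⁻¹ log Tr ((σ^{(1-p)/(2p)} ρ σ^{(1-p)/(2p)})^p)` (`⊤` when the trace
vanishes, i.e. when the honest value is `+∞`); `D_1` is the Umegaki relative
entropy and `D_∞` the max-relative entropy. -/
def Dp (p : ℝ≥0∞) (ρ σ : Mat n) : EReal :=
  if p = ⊤ then Dinf ρ σ
  else if p = 1 then DU ρ σ
  else if 1 < p.toReal ∧ ¬ suppLe ρ σ then ⊤
  else if traceR (mpow (sandwich p.toReal ρ σ) p.toReal) = 0 then ⊤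
  else (((p.toReal - 1)⁻¹ * Real.log (traceR (mpow (sandwich p.toReal ρ σ) p.toReal)) : ℝ) : EReal)

/-- `D_p(ρ‖S) = inf { D_p(ρ‖σ) | σ a density in S }`. -/
def DpSet (p : ℝ≥0∞) (ρ : Mat n) (S : Set (Mat n)) : EReal :=
  ⨅ σ ∈ {σ ∈ S | IsDensity σ}, Dp p ρ σ

/-- `D_p(A‖S) = sup { D_p(ρ‖S) | ρ a density in A }`. -/
def DpRel (p : ℝ≥0∞) (A S : Set (Mat n)) : EReal :=
  ⨆ ρ ∈ {ρ ∈ A | IsDensity ρ}, DpSet p ρ S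

open scoped Kronecker in
/-- The algebraic tensor product `N₁ ⊗ N₂ ⊆ M_{n₁} ⊗ M_{n₂} = M_{n₁ × n₂}`,
realized as the linear span of Kronecker products. -/
def tensorSpan {n₁ n₂ : Type*} [Fintype n₁] [DecidableEq n₁] [Fintype n₂] [DecidableEq n₂]
    (N₁ : Set (Mat n₁)) (N₂ : Set (Mat n₂)) : Set (Mat (n₁ × n₂)) :=
  ↑(Submodule.span ℂ {z : Mat (n₁ × n₂) | ∃ x ∈ N₁, ∃ y ∈ N₂, z = x ⊗ₖ y})

/-- `D_{p,cb}(M‖N) = sup_k D_p(M_k ⊗ M ‖ M_k ⊗ N)`. -/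
def DpCb (p : ℝ≥0∞) (N : Set (Mat n)) : EReal :=
  ⨆ k : ℕ, DpRel p Set.univ (tensorSpan (Set.univ : Set (Mat (Fin k))) N)

/-- `E` is the trace preserving conditional expectation onto `N`, i.e. the
orthogonal projection onto `N` with respect to the Hilbert–Schmidt inner
product `⟨x,y⟩ = Tr(x* y)`. -/
def IsCondExp (N : Set (Mat n)) (E : Mat n →ₗ[ℂ] Mat n) : Prop :=
  (∀ x, E x ∈ N) ∧ (∀ x ∈ N, E x = x) ∧
    ∀ x y, y ∈ N → ((E x)ᴴ * y).trace = (xᴴ * y).trace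

/-- The Pimsner–Popa index constant
`λ(M:N) = max {c ≥ 0 | c x ≤ E(x) for all x ≥ 0}`. -/
def ppIndex (E : Mat n →ₗ[ℂ] Mat n) : ℝ :=
  sSup {c : ℝ | 0 ≤ c ∧ ∀ x : Mat n, x.PosSemidef → (E x - c • x).PosSemidef}

/-- von Neumann entropy `H(ρ) = -Tr(ρ log ρ)`. -/
def vnEntropy (ρ : Mat n) : ℝ := - traceR (ρ * mlog ρ)

/-- The amplification `id_{M_k} ⊗ Φ` acting on `M_k ⊗ M_n = M_{k × n}`,
applying `Φ` blockwise. -/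
def ampFun (k : Type*) [Fintype k] [DecidableEq k] (Φ : Mat n →ₗ[ℂ] Mat n)
    (X : Mat (k × n)) : Mat (k × n) :=
  Matrix.of fun a b => Φ (Matrix.of fun s t => X (a.1, s) (b.1, t)) a.2 b.2

/-- Complete positivity: all amplifications `id_{M_k} ⊗ Φ` preserve positive
semidefiniteness. -/
def IsCP (Φ : Mat n →ₗ[ℂ] Mat n) : Prop :=
  ∀ (k : ℕ) (X : Mat (Fin k × n)), X.PosSemidef → (ampFun (Fin k) Φ X).PosSemidef

/-- Completely positive and trace preserving. -/
def IsCPTP (Φ : Mat n →ₗ[ℂ] Mat n) : Prop :=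
  IsCP Φ ∧ ∀ x : Mat n, (Φ x).trace = x.trace

lemma traceR_cfc {A : Mat n} (hA : A.IsHermitian) (f : ℝ → ℝ) :
    traceR (cfc f A) = ∑ i, f (hA.eigenvalues i) := by
  rw [hA.cfc_eq, IsHermitian.cfc, Unitary.conjStarAlgAut_apply, traceR, Matrix.trace_mul_comm,
    ← mul_assoc]
  simp [Matrix.trace]

lemma cfc_mul' {A : Mat n} (f g : ℝ → ℝ) :
    cfc f A * cfc g A = cfc (fun x => f x * g x) A := by
  exact (cfc_mul f g A (A.finite_real_spectrum.continuousOn _)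
    (A.finite_real_spectrum.continuousOn _)).symm

lemma traceR_cfc_mul {A B : Mat n} (hA : A.IsHermitian) (hB : B.IsHermitian) :
    ∃ c : n → n → ℝ, (∀ i j, 0 ≤ c i j) ∧ ∀ f g : ℝ → ℝ,
      traceR (cfc f A * cfc g B) =
        ∑ i, ∑ j, f (hA.eigenvalues i) * g (hB.eigenvalues j) * c i j := by
  set U : Mat n := (hA.eigenvectorUnitary : Mat n) with hU
  set V : Mat n := (hB.eigenvectorUnitary : Mat n) with hV
  refine ⟨fun i j => Complex.normSq ((star U * V) i j), fun i j => Complex.normSq_nonneg _, ?_⟩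
  intro f g
  rw [hA.cfc_eq, hB.cfc_eq, IsHermitian.cfc, IsHermitian.cfc, Unitary.conjStarAlgAut_apply,
    Unitary.conjStarAlgAut_apply, traceR, ← hU, ← hV]
  set D₁ : Mat n := diagonal (RCLike.ofReal ∘ f ∘ hA.eigenvalues) with h1
  set D₂ : Mat n := diagonal (RCLike.ofReal ∘ g ∘ hB.eigenvalues) with h2
  have h3 : (U * D₁ * star U * (V * D₂ * star V)).trace
      = (D₁ * ((star U * V) * D₂ * star (star U * V))).trace := by
    rw [mul_assoc U, mul_assoc U, Matrix.trace_mul_comm]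
    simp [mul_assoc]
  rw [h3, Matrix.trace, Complex.re_sum]
  refine Finset.sum_congr rfl fun i _ => ?_
  rw [h1, h2, Matrix.diag_apply, Matrix.diagonal_mul, Matrix.mul_apply, Finset.mul_sum,
    Complex.re_sum]
  refine Finset.sum_congr rfl fun j _ => ?_
  rw [Matrix.mul_diagonal, Matrix.star_apply]
  show _ = _ * _ * Complex.normSq ((star U * V) i j)
  generalize (star U * V) i j = z
  simp [Complex.normSq_apply]
  ring

lemma cfc_mem' (P : StarSubalgebra ℂ (Mat n)) {A : Mat n} (hA : A ∈ P) (f : ℝ → ℝ) :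
    cfc f A ∈ P := by
  have hc : IsClosed (P : Set (Mat n)) :=
    Submodule.closed_of_finiteDimensional (Subalgebra.toSubmodule P.toSubalgebra)
  exact cfc_mem (𝕜' := ℂ) (hs := hc) f hA

/-- The kernel projection. -/
def kerP (A : Mat n) : Mat n := cfc (fun x : ℝ => if x = 0 then (1 : ℝ) else 0) A

lemma mul_kerP {ω : Mat n} (herm : ω.IsHermitian) : ω * kerP ω = 0 := by
  have idω : cfc (fun x : ℝ => x) ω = ω := cfc_id' ℝ ω herm
  have h : cfc (fun x : ℝ => x) ω * kerP ω = 0 := by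
    rw [kerP, cfc_mul']
    have : (fun x : ℝ => x * (if x = 0 then (1 : ℝ) else 0)) = fun _ => 0 := by
      funext x; by_cases hx : x = 0 <;> simp [hx]
    rw [this, cfc_const_zero]
  rwa [idω] at h

lemma suppLe_mul {ω τ : Mat n} (hτ : τ.IsHermitian) (h : suppLe ω τ) : ω * kerP τ = 0 := by
  apply Matrix.ext_of_mulVec_single
  intro i
  rw [← Matrix.mulVec_mulVec, Matrix.zero_mulVec]
  apply h
  rw [Matrix.mulVec_mulVec, mul_kerP hτ, Matrix.zero_mulVec]

lemma suppLe_of_trace {ρ ω : Mat n} (hρ : ρ.PosSemidef) (herm : ω.IsHermitian)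
    (h : (ρ * kerP ω).trace = 0) : suppLe ρ ω := by
  intro v hv
  have idω : cfc (fun x : ℝ => x) ω = ω := cfc_id' ℝ ω herm
  have eh : (kerP ω).IsHermitian := cfc_predicate (p := IsSelfAdjoint) _ _
  have ee : kerP ω * kerP ω = kerP ω := by
    rw [kerP, cfc_mul']; congr 1; funext x; split_ifs <;> simp
  have ev : kerP ω *ᵥ v = v := by
    have h1 : kerP ω + cfc (fun x : ℝ => x⁻¹) ω * cfc (fun x : ℝ => x) ω = 1 := by
      rw [kerP, cfc_mul', ← cfc_add (hf := ω.finite_real_spectrum.continuousOn _)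
        (hg := ω.finite_real_spectrum.continuousOn _), ← cfc_const_one ℝ ω herm]
      congr 1; funext x; by_cases hx : x = 0 <;> simp [hx]
    rw [idω] at h1
    have h2 := congrArg (fun M => M *ᵥ v) h1
    simpa [Matrix.add_mulVec, ← Matrix.mulVec_mulVec, hv] using h2
  have t0 : ((kerP ω)ᴴ * ρ * kerP ω).trace = 0 := by
    rw [Matrix.trace_mul_comm, eh.eq, ← mul_assoc, ee, Matrix.trace_mul_comm, h]
  have z0 : (kerP ω)ᴴ * ρ * kerP ω = 0 :=
    (hρ.conjTranspose_mul_mul_same (kerP ω)).trace_eq_zero_iff.1 t0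
  rw [← hρ.dotProduct_mulVec_zero_iff, ← ev, Matrix.star_mulVec, ← Matrix.dotProduct_mulVec,
    Matrix.mulVec_mulVec, Matrix.mulVec_mulVec, z0]
  simp

lemma klein {ω τ : Mat n} (hω : IsDensity ω) (hτ : IsDensity τ) (h : suppLe ω τ) :
    0 ≤ traceR (ω * mlog ω - ω * mlog τ) := by
  obtain ⟨c, hc, H⟩ := traceR_cfc_mul hω.1.1 hτ.1.1
  have idω : cfc (fun x : ℝ => x) ω = ω := cfc_id' ℝ ω hω.1.1
  have idτ : cfc (fun x : ℝ => x) τ = τ := cfc_id' ℝ τ hτ.1.1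
  have oneω : cfc (fun _ : ℝ => (1 : ℝ)) ω = 1 := cfc_const_one ℝ ω hω.1.1
  have oneτ : cfc (fun _ : ℝ => (1 : ℝ)) τ = 1 := cfc_const_one ℝ τ hτ.1.1
  have e1 := H (fun x => x * Real.log x) (fun _ => 1)
  have e2 := H (fun x => x) Real.log
  have e3 := H (fun x => x) (fun _ => 1)
  have e4 := H (fun _ => 1) (fun x => x)
  have e5 := H (fun x => x) (fun x => if x = 0 then 1 else 0)
  rw [← cfc_mul', idω, oneτ, mul_one] at e1
  rw [idω] at e2 e5
  rw [idω, oneτ, mul_one, show traceR ω = 1 by rw [traceR, hω.2, Complex.one_re]] at e3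
  rw [idτ, oneω, one_mul, show traceR τ = 1 by rw [traceR, hτ.2, Complex.one_re]] at e4
  have z : ω * cfc (fun x : ℝ => if x = 0 then (1 : ℝ) else 0) τ = 0 := by
    exact suppLe_mul hτ.1.1 h
  rw [z, traceR, Matrix.trace_zero, Complex.zero_re] at e5
  have p0 := hω.1.eigenvalues_nonneg
  have q0 := hτ.1.eigenvalues_nonneg
  have hz : ∀ i j, hω.1.1.eigenvalues i *
      (if hτ.1.1.eigenvalues j = 0 then 1 else 0) * c i j = 0 := by
    have nn : ∀ i j, 0 ≤ hω.1.1.eigenvalues i *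
      (if hτ.1.1.eigenvalues j = 0 then (1:ℝ) else 0) * c i j := by
      intro i j
      exact mul_nonneg (mul_nonneg (p0 i) (by split_ifs <;> simp)) (hc i j)
    intro i j
    have := (Finset.sum_eq_zero_iff_of_nonneg
      (fun i _ => Finset.sum_nonneg fun j _ => nn i j)).1 e5.symm i (Finset.mem_univ _)
    exact (Finset.sum_eq_zero_iff_of_nonneg (fun j _ => nn i j)).1 this j (Finset.mem_univ _)
  have key : traceR (ω * mlog ω - ω * mlog τ) =
      ∑ i, ∑ j, (hω.1.1.eigenvalues i * Real.log (hω.1.1.eigenvalues i)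
        - hω.1.1.eigenvalues i * Real.log (hτ.1.1.eigenvalues j)
        - hω.1.1.eigenvalues i + hτ.1.1.eigenvalues j) * c i j := by
    have : traceR (ω * mlog ω - ω * mlog τ) =
        traceR (ω * cfc Real.log ω) - traceR (ω * cfc Real.log τ)
          - 1 + 1 := by
      simp [traceR, mlog]
    rw [this, e1, e2]
    have e6 : ∀ a b : ℝ, a - b - 1 + 1 = a - b -
        (∑ i, ∑ j, hω.1.1.eigenvalues i * 1 * c i j)
        + ∑ i, ∑ j, 1 * hτ.1.1.eigenvalues j * c i j := fun a b => by rw [← e3, ← e4]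
    rw [e6]
    simp only [← Finset.sum_sub_distrib, ← Finset.sum_add_distrib]
    refine Finset.sum_congr rfl fun i _ => Finset.sum_congr rfl fun j _ => ?_
    ring
  rw [key]
  refine Finset.sum_nonneg fun i _ => Finset.sum_nonneg fun j _ => ?_
  have hz' := hz i j
  have hp := p0 i
  have hq := q0 j
  have hcc := hc i j
  generalize hω.1.1.eigenvalues i = p at *
  generalize hτ.1.1.eigenvalues j = q at *
  generalize c i j = d at *
  rcases hq.eq_or_lt with rfl | hq
  · simp only [if_true, mul_one] at hz'
    have : (p * Real.log p - p * Real.log 0 - p + 0) * d = (p * d) * (Real.log p - Real.log 0 - 1) := by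
      ring
    rw [this, hz', zero_mul]
  refine mul_nonneg ?_ hcc
  rcases hp.eq_or_lt with rfl | hp
  · simp [hq.le]
  have h1 := Real.log_le_sub_one_of_pos (div_pos hq hp)
  rw [Real.log_div hq.ne' hp.ne'] at h1
  have h2 := mul_le_mul_of_nonneg_left h1 hp.le
  have h3 : p * (q / p - 1) = q - p := by field_simp
  nlinarith

lemma exists_condExp (P : StarSubalgebra ℂ (Mat n)) {ρ : Mat n} (hρ : IsDensity ρ) :
    ∃ ω ∈ P, IsDensity ω ∧ suppLe ρ ω ∧ ∀ y ∈ P, (ω * y).trace = (ρ * y).trace := by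
  let S : Submodule ℂ (Mat n) := Subalgebra.toSubmodule P.toSubalgebra
  let B : Mat n →ₗ[ℂ] Mat n →ₗ[ℂ] ℂ :=
    (LinearMap.mul ℂ (Mat n)).compr₂ (Matrix.traceLinearMap n ℂ ℂ)
  have hB : ∀ x y, B x y = (x * y).trace := fun x y => rfl
  let T : S →ₗ[ℂ] Module.Dual ℂ S := B.domRestrict₁₂ S S
  have hT : ∀ x y : S, T x y = ((x : Mat n) * (y : Mat n)).trace := fun x y => rfl
  have inj0 : ∀ x ∈ P, (∀ y ∈ P, (x * y).trace = 0) → x = 0 := by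
    intro x hx h
    have := h (star x) (star_mem hx)
    rwa [Matrix.star_eq_conjTranspose, Matrix.trace_mul_conjTranspose_self_eq_zero_iff] at this
  have inj : Function.Injective T := by
    rw [← LinearMap.ker_eq_bot, LinearMap.ker_eq_bot']
    intro x hx
    apply Subtype.ext
    exact inj0 x x.2 fun y hy => by
      rw [← hT x ⟨y, hy⟩, hx]; rfl
  have surj : Function.Surjective T :=
    (LinearMap.injective_iff_surjective_of_finrank_eq_finrank
      (Subspace.dual_finrank_eq).symm).1 inj
  obtain ⟨⟨ω, hωP⟩, hω⟩ := surj ((B ρ).domRestrict S)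
  have hωP : ω ∈ P := hωP
  have htr : ∀ y ∈ P, (ω * y).trace = (ρ * y).trace := fun y hy => by
    have := LinearMap.congr_fun hω ⟨y, hy⟩
    exact this
  have herm : ω.IsHermitian := by
    have := inj0 (star ω - ω) (sub_mem (star_mem hωP) hωP) fun y hy => by
      have h1 := htr (star y) (star_mem hy)
      have h2 := congrArg star h1
      rw [← Matrix.trace_conjTranspose, ← Matrix.trace_conjTranspose, conjTranspose_mul,
        conjTranspose_mul, hρ.1.1.eq, Matrix.star_eq_conjTranspose, conjTranspose_conjTranspose,
        Matrix.trace_mul_comm, Matrix.trace_mul_comm y] at h2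
      rw [sub_mul, Matrix.trace_sub, htr y hy, Matrix.star_eq_conjTranspose, h2, sub_self]
    exact sub_eq_zero.1 this
  have idω : cfc (fun x : ℝ => x) ω = ω := cfc_id' ℝ ω herm
  have idρ : cfc (fun x : ℝ => x) ρ = ρ := cfc_id' ℝ ρ hρ.1.1
  have psd : ω.PosSemidef := by
    rw [herm.posSemidef_iff_eigenvalues_nonneg]
    have h1 : traceR (cfc (fun x : ℝ => x * max (-x) 0) ω) =
        traceR (cfc (fun x : ℝ => x) ρ * cfc (fun x : ℝ => max (-x) 0) ω) := by
      rw [← cfc_mul', idω, idρ, traceR, traceR, htr _ (cfc_mem' P hωP _)]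
    obtain ⟨c, hc, H⟩ := traceR_cfc_mul hρ.1.1 herm
    have h2 : 0 ≤ traceR (cfc (fun x : ℝ => x * max (-x) 0) ω) := by
      rw [h1, H]
      exact Finset.sum_nonneg fun i _ => Finset.sum_nonneg fun j _ =>
        mul_nonneg (mul_nonneg (hρ.1.eigenvalues_nonneg i) (le_max_right _ _)) (hc i j)
    rw [traceR_cfc herm] at h2
    have nn : ∀ x : ℝ, x * max (-x) 0 ≤ 0 := fun x => by
      rcases le_total 0 x with hx | hx
      · rw [max_eq_right (by linarith)]; simp
      · rw [max_eq_left (by linarith)]; nlinarith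
    have h3 := (Finset.sum_eq_zero_iff_of_nonpos
      (fun i (_ : i ∈ Finset.univ) => nn (herm.eigenvalues i))).1
      (le_antisymm (Finset.sum_nonpos fun i _ => nn _) h2)
    intro i
    have h4 := h3 i (Finset.mem_univ i)
    by_contra hlt
    have hlt : herm.eigenvalues i < 0 := not_le.1 hlt
    rw [max_eq_left (by linarith)] at h4
    nlinarith
  refine ⟨ω, hωP, ⟨psd, ?_⟩, ?_, htr⟩
  · have := htr 1 (one_mem P)
    rwa [mul_one, mul_one, hρ.2] at this
  refine suppLe_of_trace hρ.1 herm ?_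
  rw [← htr (kerP ω) (cfc_mem' P hωP _), mul_kerP herm, Matrix.trace_zero]

lemma traceR_eq {P : StarSubalgebra ℂ (Mat n)} {ρ ω σ : Mat n} (hσ : σ ∈ P)
    (h : ∀ y ∈ P, (ω * y).trace = (ρ * y).trace) :
    traceR (ω * mlog σ) = traceR (ρ * mlog σ) := by
  rw [traceR, traceR, h (mlog σ) (cfc_mem' P hσ _)]

lemma chain {P : StarSubalgebra ℂ (Mat n)} {ρ ω σ : Mat n} (hω : ω ∈ P) (hσ : σ ∈ P)
    (hs : suppLe ρ ω) (h : ∀ y ∈ P, (ω * y).trace = (ρ * y).trace) :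
    DU ρ σ ≤ ((traceR (ρ * mlog ρ - ρ * mlog ω) : ℝ) : EReal) + DU ω σ := by
  by_cases h1 : suppLe ω σ
  · have h2 : suppLe ρ σ := fun v hv => hs v (h1 v hv)
    rw [DU, DU, if_pos h1, if_pos h2, ← EReal.coe_add]
    refine EReal.coe_le_coe_iff.2 (le_of_eq ?_)
    have a := traceR_eq hσ h
    have b := traceR_eq hω h
    simp only [traceR, Matrix.trace_sub, Complex.sub_re] at *
    linarith
  · rw [DU, DU, if_neg h1, EReal.coe_add_top]
    exact le_top

lemma suppLe_cond {P : StarSubalgebra ℂ (Mat n)} {ρ ω τ : Mat n} (hτ : τ ∈ P)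
    (hωd : IsDensity ω) (hτd : IsDensity τ)
    (h : ∀ y ∈ P, (ω * y).trace = (ρ * y).trace) (hs : suppLe ρ τ) : suppLe ω τ := by
  refine suppLe_of_trace hωd.1 hτd.1.1 ?_
  rw [h (kerP τ) (cfc_mem' P hτ _), suppLe_mul hτd.1.1 hs, Matrix.trace_zero]

/-- for nested unital *-subalgebras `N ⊆ P ⊆ M_m`,
`D(M_m‖N) ≤ D(M_m‖P) + D(P‖N)`. -/
theorem statement8 {m : ℕ} (N P : StarSubalgebra ℂ (Mat (Fin m)))
    (hNP : (N : Set (Mat (Fin m))) ⊆ (P : Set (Mat (Fin m)))) :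
    DpRel 1 Set.univ (N : Set (Mat (Fin m))) ≤
      DpRel 1 Set.univ (P : Set (Mat (Fin m)))
        + DpRel 1 (P : Set (Mat (Fin m))) (N : Set (Mat (Fin m))) := by
  have d1 : ∀ ρ σ : Mat (Fin m), Dp 1 ρ σ = DU ρ σ := fun ρ σ => by simp [Dp]
  refine iSup₂_le fun ρ hρ => ?_
  have hρ : IsDensity ρ := hρ.2
  obtain ⟨ω, hωP, hω, hs, htr⟩ := exists_condExp P hρ
  have A : ((traceR (ρ * mlog ρ - ρ * mlog ω) : ℝ) : EReal) ≤ DpSet 1 ρ (P : Set (Mat (Fin m))) := by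
    refine le_iInf₂ fun τ hτ => ?_
    rw [d1, DU]
    split_ifs with h1
    · refine EReal.coe_le_coe_iff.2 ?_
      have h2 := klein hω hτ.2 (suppLe_cond hτ.1 hω hτ.2 htr h1)
      have a := traceR_eq hτ.1 htr
      have b := traceR_eq hωP htr
      simp only [traceR, Matrix.trace_sub, Complex.sub_re] at *
      linarith
    · exact le_top
  have B : DpSet 1 ρ (N : Set (Mat (Fin m))) ≤
      ((traceR (ρ * mlog ρ - ρ * mlog ω) : ℝ) : EReal) + DpSet 1 ω (N : Set (Mat (Fin m))) := by
    rw [add_comm, ← EReal.sub_le_iff_le_add (Or.inl (EReal.coe_ne_bot _))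
      (Or.inl (EReal.coe_ne_top _))]
    refine le_iInf₂ fun σ hσ => ?_
    rw [EReal.sub_le_iff_le_add (Or.inl (EReal.coe_ne_bot _))
      (Or.inl (EReal.coe_ne_top _)), add_comm, d1]
    refine le_trans (iInf₂_le σ hσ) ?_
    rw [d1]
    exact chain hωP (hNP hσ.1) hs htr
  refine B.trans (add_le_add (A.trans ?_) ?_)
  · exact le_iSup₂ (f := fun ρ (_ : ρ ∈ {ρ ∈ (Set.univ : Set (Mat (Fin m))) | IsDensity ρ}) =>
      DpSet 1 ρ (P : Set (Mat (Fin m)))) ρ ⟨trivial, hρ⟩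
  · exact le_iSup₂ (f := fun ρ (_ : ρ ∈ {ρ ∈ (P : Set (Mat (Fin m))) | IsDensity ρ}) =>
      DpSet 1 ρ (N : Set (Mat (Fin m)))) ω ⟨hωP, hω⟩

end GJL
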